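/- Let l > 0, m > 0, 0 < θ ≤ π/2, γ = M(l), δ = R_θ·M(m)·R_{-θ}, and w = (sin θ·(cosh m - 1)·sinh l, -sin θ·(cosh m - 1)·(cosh l + 1), sinh l·sinh m + cos θ·(cosh l + 1)·(cosh m - 1)). Then the fixed space of δγ is exactly the line spanned by w: {x ∈ ℝ³ : (δγ)·x = x} = ℝ·w. -/

import Mathlib

/-- The Minkowski bilinear form on ℝ³. -/
noncomputable def B (x y : Fin 3 → ℝ) : ℝ := -(x 0 * y 0) + x 1 * y 1 + x 2 * y 2

/-- Hyperbolic translation of length `l` along the standard axis. -/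
noncomputable def Mmat (l : ℝ) : Matrix (Fin 3) (Fin 3) ℝ :=
  !![Real.cosh l, Real.sinh l, 0; Real.sinh l, Real.cosh l, 0; 0, 0, 1]

/-- Rotation by angle `θ`. -/
noncomputable def Rmat (θ : ℝ) : Matrix (Fin 3) (Fin 3) ℝ :=
  !![1, 0, 0; 0, Real.cos θ, -Real.sin θ; 0, Real.sin θ, Real.cos θ]

/-- Generator of the fixed line of `δγ`. -/
noncomputable def wvec (l m θ : ℝ) : Fin 3 → ℝ :=
  ![Real.sin θ * (Real.cosh m - 1) * Real.sinh l,
    -(Real.sin θ * (Real.cosh m - 1) * (Real.cosh l + 1)),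
    Real.sinh l * Real.sinh m + Real.cos θ * (Real.cosh l + 1) * (Real.cosh m - 1)]

/-- Generator of the fixed line of the commutator `α = δ⁻¹γ⁻¹δγ`. -/
noncomputable def vvec (l m θ : ℝ) : Fin 3 → ℝ :=
  ![Real.sinh l * Real.sinh m + (Real.cosh l - 1) * (Real.cosh m - 1) * Real.cos θ,
    -(Real.sinh m * (Real.cosh l - 1)) - Real.sinh l * (Real.cosh m - 1) * Real.cos θ,
    -(Real.sin θ * Real.sinh l * (Real.cosh m - 1))]

/-!
`γ` and `δ` are translations along two geodesics meeting at the origin `axisPoint 0` of the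
hyperboloid, so each is a product of two reflections in unit timelike vectors, one of which can be
chosen to be the reflection in `axisPoint 0`. That common reflection cancels in `δγ`, which becomes
the product of the reflections in two vectors `q` and `p`. When these are independent, the fixed
space is the orthogonal complement of `{q, p}`, which is spanned by their Lorentzian cross product;
`w` is a multiple of it.
-/

open Matrix

theorem preReflection_comp_preReflection_apply_eq_self_iff {R M : Type*} [CommRing R]
    [AddCommGroup M] [Module R M] {p q : M} {f g : Module.Dual R M} (hg : g q = 2)
    (hpq : LinearIndependent R ![q, p]) (x : M) :
    Module.preReflection q g (Module.preReflection p f x) = x ↔ g x = 0 ∧ f x = 0 := by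
  rw [(Module.involutive_preReflection hg).eq_iff, Module.preReflection_apply,
    Module.preReflection_apply, sub_right_inj]
  constructor
  · intro h
    have hcomb : g x • q + (-f x) • p = 0 := by rw [neg_smul, h, add_neg_cancel]
    obtain ⟨hgx, hfx⟩ := LinearIndependent.pair_iff.mp hpq _ _ hcomb
    exact ⟨hgx, neg_eq_zero.mp hfx⟩
  · rintro ⟨hgx, hfx⟩
    rw [hgx, hfx, zero_smul, zero_smul]

theorem dotProduct_eq_zero_and_iff_mem_span_cross {F : Type*} [Field F] {u v : Fin 3 → F}
    (huv : u ⨯₃ v ≠ 0) (x : Fin 3 → F) :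
    u ⬝ᵥ x = 0 ∧ v ⬝ᵥ x = 0 ↔ x ∈ F ∙ u ⨯₃ v := by
  rw [Submodule.mem_span_singleton]
  constructor
  · rintro ⟨hu, hv⟩
    have hcross : u ⨯₃ v ⨯₃ x = 0 := by
      rw [cross_cross_eq_smul_sub_smul, hu, hv, zero_smul, zero_smul, sub_zero]
    by_contra! hx
    exact crossProduct_ne_zero_iff_linearIndependent.mpr
      ((LinearIndependent.pair_iff' huv).mpr hx) hcross
  · rintro ⟨t, rfl⟩
    simp only [dotProduct_smul, dot_self_cross, dot_cross_self, smul_zero, and_self]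

/-- The Gram matrix of the Minkowski form `B` in the standard basis. -/
noncomputable def minkowskiGram : Matrix (Fin 3) (Fin 3) ℝ :=
  diagonal ![-1, 1, 1]

theorem minkowskiGram_mulVec (x : Fin 3 → ℝ) : minkowskiGram *ᵥ x = ![-x 0, x 1, x 2] := by
  ext i
  fin_cases i <;> simp [minkowskiGram, mulVec_diagonal]

/-- The Minkowski form `B` as a bilinear form, so that `minkowskiForm p` is a linear functional. -/
noncomputable def minkowskiForm : LinearMap.BilinForm ℝ (Fin 3 → ℝ) :=
  toBilin' minkowskiGram

theorem minkowskiForm_apply (x y : Fin 3 → ℝ) : minkowskiForm x y = B x y := by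
  simp [minkowskiForm, toBilin'_apply', minkowskiGram_mulVec, dotProduct, Fin.sum_univ_three, B]

theorem minkowskiForm_apply_eq_dotProduct (x y : Fin 3 → ℝ) :
    minkowskiForm x y = (minkowskiGram *ᵥ x) ⬝ᵥ y := by
  rw [minkowskiForm, toBilin'_apply', dotProduct_mulVec, ← mulVec_transpose, minkowskiGram,
    diagonal_transpose]

/-- The Lorentzian cross product, a vector `B`-orthogonal to both factors: the Euclidean cross
product of the coordinate vectors of the functionals `B u` and `B v`. -/
noncomputable def minkowskiCross (u v : Fin 3 → ℝ) : Fin 3 → ℝ :=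
  (minkowskiGram *ᵥ u) ⨯₃ (minkowskiGram *ᵥ v)

theorem linearIndependent_of_minkowskiCross_ne_zero {u v : Fin 3 → ℝ}
    (huv : minkowskiCross u v ≠ 0) : LinearIndependent ℝ ![u, v] := by
  apply LinearIndependent.of_comp minkowskiGram.mulVecLin
  rw [← FinVec.map_eq]
  exact crossProduct_ne_zero_iff_linearIndependent.mp huv

/-- The Lorentz reflection `x ↦ x + 2 B(p, x) p`; for a unit timelike `p`, that is `B p p = -1`, it
negates `p` and fixes the orthogonal complement of `p`. -/
noncomputable def minkowskiReflection (p : Fin 3 → ℝ) : Module.End ℝ (Fin 3 → ℝ) :=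
  Module.preReflection p ((-2 : ℝ) • minkowskiForm p)

theorem minkowskiReflection_apply (p x : Fin 3 → ℝ) :
    minkowskiReflection p x = x + (2 * B p x) • p := by
  simp [minkowskiReflection, Module.preReflection_apply, minkowskiForm_apply]

theorem neg_two_smul_minkowskiForm_self {p : Fin 3 → ℝ} (hp : B p p = -1) :
    ((-2 : ℝ) • minkowskiForm p) p = 2 := by
  rw [LinearMap.smul_apply, minkowskiForm_apply, hp, smul_eq_mul]
  norm_num

theorem minkowskiReflection_involutive {p : Fin 3 → ℝ} (hp : B p p = -1) :
    Function.Involutive (minkowskiReflection p) :=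
  Module.involutive_preReflection (neg_two_smul_minkowskiForm_self hp)

theorem minkowskiReflection_comp_apply_eq_self_iff {p q : Fin 3 → ℝ} (hq : B q q = -1)
    (hqp : minkowskiCross q p ≠ 0) (x : Fin 3 → ℝ) :
    minkowskiReflection q (minkowskiReflection p x) = x ↔ x ∈ ℝ ∙ minkowskiCross q p := by
  rw [minkowskiCross, ← dotProduct_eq_zero_and_iff_mem_span_cross hqp,
    ← minkowskiForm_apply_eq_dotProduct, ← minkowskiForm_apply_eq_dotProduct]
  simpa [minkowskiReflection] using preReflection_comp_preReflection_apply_eq_self_iff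
    (f := (-2 : ℝ) • minkowskiForm p) (neg_two_smul_minkowskiForm_self hq)
    (linearIndependent_of_minkowskiCross_ne_zero hqp) x

theorem mulVec_minkowskiReflection {A : Matrix (Fin 3) (Fin 3) ℝ}
    (hA : ∀ x y, B (A *ᵥ x) (A *ᵥ y) = B x y) (p x : Fin 3 → ℝ) :
    A *ᵥ minkowskiReflection p x = minkowskiReflection (A *ᵥ p) (A *ᵥ x) := by
  rw [minkowskiReflection_apply, minkowskiReflection_apply, mulVec_add, mulVec_smul, hA]

/-- The point at signed distance `a` from the origin `(1, 0, 0)` on the axis of the translations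
`Mmat l`, in the hyperboloid model of the hyperbolic plane. -/
noncomputable def axisPoint (a : ℝ) : Fin 3 → ℝ :=
  ![Real.cosh a, Real.sinh a, 0]

theorem B_axisPoint_self (a : ℝ) : B (axisPoint a) (axisPoint a) = -1 := by
  simp only [B, axisPoint, cons_val]
  linear_combination -Real.cosh_sq_sub_sinh_sq a

theorem minkowskiReflection_axisPoint_apply (a : ℝ) (x : Fin 3 → ℝ) :
    minkowskiReflection (axisPoint a) x =
      ![-Real.cosh (2 * a) * x 0 + Real.sinh (2 * a) * x 1,
        -Real.sinh (2 * a) * x 0 + Real.cosh (2 * a) * x 1,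
        x 2] := by
  have h := Real.cosh_sq a
  rw [minkowskiReflection_apply, Real.cosh_two_mul, Real.sinh_two_mul]
  ext i
  fin_cases i <;> dsimp [B, axisPoint]
  · linear_combination -x 0 * h
  · linear_combination -x 1 * h
  · ring

theorem Mmat_mulVec (l : ℝ) (x : Fin 3 → ℝ) :
    Mmat l *ᵥ x =
      ![Real.cosh l * x 0 + Real.sinh l * x 1, Real.sinh l * x 0 + Real.cosh l * x 1, x 2] := by
  ext i
  fin_cases i <;> simp [Mmat, mulVec, dotProduct, Fin.sum_univ_three]

theorem Mmat_mulVec_eq_minkowskiReflection_comp (a b : ℝ) (x : Fin 3 → ℝ) :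
    Mmat (2 * (a - b)) *ᵥ x =
      minkowskiReflection (axisPoint a) (minkowskiReflection (axisPoint b) x) := by
  rw [minkowskiReflection_axisPoint_apply, minkowskiReflection_axisPoint_apply,
    Mmat_mulVec, mul_sub, Real.cosh_sub, Real.sinh_sub]
  ext i
  fin_cases i <;> dsimp <;> ring

theorem Rmat_mulVec (θ : ℝ) (x : Fin 3 → ℝ) :
    Rmat θ *ᵥ x =
      ![x 0, Real.cos θ * x 1 - Real.sin θ * x 2, Real.sin θ * x 1 + Real.cos θ * x 2] := by
  ext i
  fin_cases i <;> simp [Rmat, mulVec, dotProduct, Fin.sum_univ_three, sub_eq_add_neg]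

theorem B_Rmat_mulVec (θ : ℝ) (x y : Fin 3 → ℝ) : B (Rmat θ *ᵥ x) (Rmat θ *ᵥ y) = B x y := by
  simp only [B, Rmat_mulVec, cons_val]
  linear_combination (x 1 * y 1 + x 2 * y 2) * Real.sin_sq_add_cos_sq θ

theorem Rmat_mulVec_axisPoint_zero (θ : ℝ) : Rmat θ *ᵥ axisPoint 0 = axisPoint 0 := by
  simp [Rmat_mulVec, axisPoint]

theorem Rmat_mul_Rmat_neg (θ : ℝ) : Rmat θ * Rmat (-θ) = 1 := by
  have h := Real.sin_sq_add_cos_sq θ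
  ext i j
  fin_cases i <;> fin_cases j <;>
    simp [Rmat, mul_apply, Fin.sum_univ_three, ← sq, mul_comm, h]

theorem delta_gamma_mulVec_eq_minkowskiReflection_comp (l m θ : ℝ) (x : Fin 3 → ℝ) :
    (Rmat θ * Mmat m * Rmat (-θ) * Mmat l) *ᵥ x =
      minkowskiReflection (Rmat θ *ᵥ axisPoint (m / 2))
        (minkowskiReflection (axisPoint (-(l / 2))) x) := by
  have hγ (y : Fin 3 → ℝ) : Mmat l *ᵥ y = minkowskiReflection (axisPoint 0)
      (minkowskiReflection (axisPoint (-(l / 2))) y) := by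
    rw [← Mmat_mulVec_eq_minkowskiReflection_comp, zero_sub, neg_neg, mul_div_cancel₀ l two_ne_zero]
  have hδ (y : Fin 3 → ℝ) : (Rmat θ * Mmat m * Rmat (-θ)) *ᵥ y =
      minkowskiReflection (Rmat θ *ᵥ axisPoint (m / 2)) (minkowskiReflection (axisPoint 0) y) :=
    calc (Rmat θ * Mmat m * Rmat (-θ)) *ᵥ y
        = Rmat θ *ᵥ Mmat (2 * (m / 2 - 0)) *ᵥ Rmat (-θ) *ᵥ y := by
          rw [mulVec_mulVec, mulVec_mulVec, sub_zero, mul_div_cancel₀ m two_ne_zero,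
            Matrix.mul_assoc]
      _ = minkowskiReflection (Rmat θ *ᵥ axisPoint (m / 2))
            (minkowskiReflection (axisPoint 0) (Rmat θ *ᵥ Rmat (-θ) *ᵥ y)) := by
          rw [Mmat_mulVec_eq_minkowskiReflection_comp,
            mulVec_minkowskiReflection (B_Rmat_mulVec θ),
            mulVec_minkowskiReflection (B_Rmat_mulVec θ), Rmat_mulVec_axisPoint_zero]
      _ = minkowskiReflection (Rmat θ *ᵥ axisPoint (m / 2))
            (minkowskiReflection (axisPoint 0) y) := by
          rw [mulVec_mulVec, Rmat_mul_Rmat_neg, one_mulVec]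
  rw [← mulVec_mulVec, hγ, hδ, minkowskiReflection_involutive (B_axisPoint_self 0)]

theorem wvec_eq_smul_minkowskiCross (l m θ : ℝ) :
    wvec l m θ = (4 * Real.cosh (l / 2) * Real.sinh (m / 2)) •
      minkowskiCross (Rmat θ *ᵥ axisPoint (m / 2)) (axisPoint (-(l / 2))) := by
  obtain ⟨a, rfl⟩ : ∃ a, l = 2 * a := ⟨l / 2, (mul_div_cancel₀ l two_ne_zero).symm⟩
  obtain ⟨b, rfl⟩ : ∃ b, m = 2 * b := ⟨m / 2, (mul_div_cancel₀ m two_ne_zero).symm⟩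
  have ha : Real.cosh (2 * a) + 1 = 2 * Real.cosh a ^ 2 := by
    linear_combination Real.cosh_two_mul a - Real.cosh_sq a
  have hb : Real.cosh (2 * b) - 1 = 2 * Real.sinh b ^ 2 := by
    linear_combination Real.cosh_two_mul b + Real.cosh_sq b
  rw [wvec, ha, hb, Real.sinh_two_mul, Real.sinh_two_mul]
  simp only [minkowskiCross, minkowskiGram_mulVec, Rmat_mulVec, axisPoint, cross_apply, cons_val,
    Real.cosh_neg, Real.sinh_neg, mul_div_cancel_left₀ _ (two_ne_zero' ℝ), smul_cons, smul_empty,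
    smul_eq_mul]
  ext i
  fin_cases i <;> dsimp <;> ring

theorem wvec_ne_zero {l m θ : ℝ} (hm : m ≠ 0) (hθ : Real.sin θ ≠ 0) : wvec l m θ ≠ 0 := by
  have hC : Real.cosh l + 1 ≠ 0 := by positivity
  have hc : Real.cosh m - 1 ≠ 0 := sub_ne_zero.mpr (Real.one_lt_cosh.mpr hm).ne'
  exact fun h ↦ neg_ne_zero.mpr (mul_ne_zero (mul_ne_zero hθ hc) hC) (congrFun h 1)

theorem fixed_space_of_delta_gamma_general {l m θ : ℝ} (hw : wvec l m θ ≠ 0) :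
    {x : Fin 3 → ℝ | ((Rmat θ * Mmat m * Rmat (-θ)) * Mmat l).mulVec x = x} =
      {x : Fin 3 → ℝ | ∃ t : ℝ, x = t • wvec l m θ} := by
  have hw_smul := wvec_eq_smul_minkowskiCross l m θ
  obtain ⟨hscale, hcross⟩ := smul_ne_zero_iff.mp (hw_smul ▸ hw)
  have hq : B (Rmat θ *ᵥ axisPoint (m / 2)) (Rmat θ *ᵥ axisPoint (m / 2)) = -1 := by
    rw [B_Rmat_mulVec, B_axisPoint_self]
  ext x
  calc (Rmat θ * Mmat m * Rmat (-θ) * Mmat l) *ᵥ x = x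
      ↔ x ∈ ℝ ∙ minkowskiCross (Rmat θ *ᵥ axisPoint (m / 2)) (axisPoint (-(l / 2))) := by
        rw [delta_gamma_mulVec_eq_minkowskiReflection_comp,
          minkowskiReflection_comp_apply_eq_self_iff hq hcross]
    _ ↔ x ∈ ℝ ∙ wvec l m θ := by
        rw [hw_smul, Submodule.span_singleton_smul_eq hscale.isUnit]
    _ ↔ ∃ t : ℝ, x = t • wvec l m θ := by
        simp only [Submodule.mem_span_singleton, eq_comm]

theorem fixed_space_of_delta_gamma (l m θ : ℝ)
    (hl : 0 < l) (hm : 0 < m) (hθ : 0 < θ) (hθ' : θ ≤ Real.pi / 2) :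
    {x : Fin 3 → ℝ | ((Rmat θ * Mmat m * Rmat (-θ)) * Mmat l).mulVec x = x} =
      {x : Fin 3 → ℝ | ∃ t : ℝ, x = t • wvec l m θ} :=
  fixed_space_of_delta_gamma_general <| wvec_ne_zero hm.ne'
    (Real.sin_pos_of_pos_of_lt_pi hθ (hθ'.trans_lt (half_lt_self Real.pi_pos))).ne'
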